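/- Suppose J* : X → ℝ satisfies the Bellman equation J*(i) = min_{u∈U(i)} Σ_{j∈X} p(i,u,j)·(g(i,u,j) + α·J*(j)) for all i ∈ X, and let δ = max_{ℓ} max_{i,j∈I_ℓ} |J*(i) − J*(j)|. Define V̄(j) = J*(j) + α·δ/(1−α) for j ∈ X and r̄_m = Σ_{j∈I_m} d_{mj}·V̄(j) for each agent m. Then for every agent ℓ and every state i ∈ I_ℓ: min_{u∈U(i)} Σ_{j∈X} p(i,u,j)·(g(i,u,j) + α·(φ_{jℓ}·V̄(j) + Σ_{m≠ℓ} φ_{jm}·r̄_m)) ≤ V̄(i). -/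

import Mathlib

open Finset Filter Topology

/-!
The Bellman operator `T` is monotone and satisfies `T (J + b) = T J + α b` for constants `b`. The
value an agent assigns to a next state `j` is a convex combination of `V̄ j` and of averages `r̄ m`
of `V̄` over sets on which `J*` differs from `J* j` by at most `δ`. As `V̄ = J* + c` with
`c = α δ / (1 - α)`, this value is at most `J* j + (c + δ)`. Applying `T` gives the bound
`T J* + α (c + δ) = J* + c = V̄`, because `c` is the fixed point of `x ↦ α (x + δ)`.
-/

section OrderedSemiring

variable {R X A ι : Type*} [Semiring R]

theorem sum_mul_le_of_sum_eq_one [PartialOrder R] [IsOrderedRing R] {s : Finset ι} {w x : ι → R}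
    {b : R} (hw0 : ∀ i ∈ s, 0 ≤ w i) (hw1 : ∑ i ∈ s, w i = 1)
    (hx : ∀ i ∈ s, w i ≠ 0 → x i ≤ b) : ∑ i ∈ s, w i * x i ≤ b :=
  calc
    ∑ i ∈ s, w i * x i ≤ ∑ i ∈ s, w i * b := by
      refine sum_le_sum fun i hi => ?_
      rcases eq_or_ne (w i) 0 with hwi | hwi
      · rw [hwi, zero_mul, zero_mul]
      · exact mul_le_mul_of_nonneg_left (hx i hi hwi) (hw0 i hi)
    _ = b := by rw [← sum_mul, hw1, one_mul]

/-- The Q-factor `∑ j, p j * (g j + α * V j)` of an action with transition probabilities `p` and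
stage costs `g`, when the next state `j` is valued at `V j`. -/
def qFactor [Fintype X] (α : R) (p g V : X → R) : R :=
  ∑ j, p j * (g j + α * V j)

/-- The Bellman operator of the discounted problem with finite action sets `U i`, sending `V` to
the function whose value at `i` is the least Q-factor of an action in `U i`. -/
def bellman [LinearOrder R] [Fintype X] (α : R) (U : X → Finset A) (hU : ∀ i, (U i).Nonempty)
    (p g : X → A → X → R) (V : X → R) (i : X) : R :=
  (U i).inf' (hU i) fun u => qFactor α (p i u) (g i u) V

/-- The value of state `j` in the problem of agent `ℓ`: with probability `φ j ℓ` the agent keeps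
its own value `V j`, and with probability `φ j m` it uses the aggregate value `r m` of agent
`m ≠ ℓ`. -/
def agentValue [Fintype ι] [DecidableEq ι] (φ : X → ι → R) (ℓ : ι) (V : X → R) (r : ι → R)
    (j : X) : R :=
  φ j ℓ * V j + ∑ m ∈ univ.erase ℓ, φ j m * r m

variable (R) in
/-- The hard aggregation probabilities of a family of sets: `j` is attached to every `m` with
`j ∈ I m`. They sum to one over `m` when the sets partition the state space. -/
def hardAggregation [DecidableEq X] (I : ι → Finset X) (j : X) (m : ι) : R :=
  if j ∈ I m then 1 else 0

theorem qFactor_le_add_const [PartialOrder R] [IsOrderedRing R] [Fintype X] {α c : R}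
    {p g V W : X → R} (hα : 0 ≤ α) (hp0 : ∀ j, 0 ≤ p j) (hp1 : ∑ j, p j = 1)
    (hVW : ∀ j, V j ≤ W j + c) : qFactor α p g V ≤ qFactor α p g W + α * c :=
  calc
    ∑ j, p j * (g j + α * V j) ≤ ∑ j, p j * (g j + α * (W j + c)) := by
      gcongr with j
      · exact hp0 j
      · exact hVW j
    _ = ∑ j, p j * (g j + α * W j) + α * c := by
      simp only [mul_add α, ← add_assoc, mul_add (p _) _ (α * c), sum_add_distrib, ← sum_mul, hp1,
        one_mul]

theorem bellman_le_add_const [LinearOrder R] [IsOrderedRing R] [Fintype X] {α c : R}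
    {U : X → Finset A} {hU : ∀ i, (U i).Nonempty} {p g : X → A → X → R} {V W : X → R}
    (hα : 0 ≤ α) (hp0 : ∀ i, ∀ u ∈ U i, ∀ j, 0 ≤ p i u j) (hp1 : ∀ i, ∀ u ∈ U i, ∑ j, p i u j = 1)
    (hVW : ∀ j, V j ≤ W j + c) (i : X) :
    bellman α U hU p g V i ≤ bellman α U hU p g W i + α * c := by
  obtain ⟨u, hu, hmin⟩ := exists_mem_eq_inf' (hU i) fun u => qFactor α (p i u) (g i u) W
  calc
    bellman α U hU p g V i ≤ qFactor α (p i u) (g i u) V := inf'_le _ hu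
    _ ≤ qFactor α (p i u) (g i u) W + α * c :=
      qFactor_le_add_const hα (hp0 i u hu) (hp1 i u hu) hVW
    _ = bellman α U hU p g W i + α * c := by rw [bellman, hmin]

theorem agentValue_eq_sum_update [Fintype ι] [DecidableEq ι] (φ : X → ι → R) (ℓ : ι) (V : X → R)
    (r : ι → R) (j : X) :
    agentValue φ ℓ V r j = ∑ m, φ j m * Function.update r ℓ (V j) m := by
  rw [agentValue, ← add_sum_erase univ _ (mem_univ ℓ), Function.update_self]
  congr 1
  refine sum_congr rfl fun m hm => ?_
  rw [Function.update_of_ne (ne_of_mem_erase hm)]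

theorem agentValue_le [PartialOrder R] [IsOrderedRing R] [Fintype ι] [DecidableEq ι]
    {φ : X → ι → R} {ℓ : ι} {V : X → R} {r : ι → R} {j : X} {b : R} (hφ0 : ∀ m, 0 ≤ φ j m)
    (hφ1 : ∑ m, φ j m = 1) (hV : V j ≤ b) (hr : ∀ m, φ j m ≠ 0 → r m ≤ b) :
    agentValue φ ℓ V r j ≤ b := by
  rw [agentValue_eq_sum_update]
  refine sum_mul_le_of_sum_eq_one (fun m _ => hφ0 m) hφ1 fun m _ hm => ?_
  rcases eq_or_ne m ℓ with rfl | hmℓ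
  · rwa [Function.update_self]
  · rw [Function.update_of_ne hmℓ]
    exact hr m hm

variable [DecidableEq X] {I : ι → Finset X}

theorem hardAggregation_nonneg [PartialOrder R] [IsOrderedRing R] (j : X) (m : ι) :
    0 ≤ hardAggregation R I j m := by
  unfold hardAggregation
  split_ifs
  exacts [zero_le_one, le_rfl]

theorem mem_of_hardAggregation_ne_zero {j : X} {m : ι} (h : hardAggregation R I j m ≠ 0) :
    j ∈ I m :=
  of_not_not fun hj => h (if_neg hj)

theorem sum_hardAggregation_eq_one [Fintype ι] (hdisj : ∀ ℓ m, ℓ ≠ m → Disjoint (I ℓ) (I m))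
    {j : X} (hcover : ∃ m, j ∈ I m) : ∑ m, hardAggregation R I j m = 1 := by
  obtain ⟨m, hm⟩ := hcover
  calc
    ∑ k, hardAggregation R I j k = hardAggregation R I j m :=
      sum_eq_single_of_mem m (mem_univ m) fun k _ hk =>
        if_neg (disjoint_right.mp (hdisj k m hk) hm)
    _ = 1 := if_pos hm

end OrderedSemiring

theorem stmt7_general {K X A ι : Type*} [Field K] [LinearOrder K] [IsStrictOrderedRing K]
    [Fintype X] [Fintype ι] [DecidableEq ι] {α δ : K} (hα0 : 0 ≤ α) (hα1 : α ≠ 1)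
    {U : X → Finset A} {hU : ∀ i, (U i).Nonempty} {p g : X → A → X → K}
    (hp0 : ∀ i, ∀ u ∈ U i, ∀ j, 0 ≤ p i u j) (hp1 : ∀ i, ∀ u ∈ U i, ∑ j, p i u j = 1)
    {φ : X → ι → K} (hφ0 : ∀ j m, 0 ≤ φ j m) (hφ1 : ∀ j, ∑ m, φ j m = 1)
    {I : ι → Finset X} {d : ι → X → K} (hd0 : ∀ m, ∀ k ∈ I m, 0 ≤ d m k)
    (hd1 : ∀ m, ∑ k ∈ I m, d m k = 1)
    {J : X → K} (hJ : ∀ i, bellman α U hU p g J i ≤ J i)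
    (hδ0 : 0 ≤ δ) (hδ : ∀ j m, φ j m ≠ 0 → ∀ k ∈ I m, J k - J j ≤ δ)
    {V : X → K} (hV : ∀ j, V j = J j + α * δ / (1 - α))
    {r : ι → K} (hr : ∀ m, r m = ∑ k ∈ I m, d m k * V k) (ℓ : ι) (i : X) :
    bellman α U hU p g (agentValue φ ℓ V r) i ≤ V i := by
  set c := α * δ / (1 - α) with hc_def
  have hc : α * (c + δ) = c := by
    have : 1 - α ≠ 0 := sub_ne_zero.mpr hα1.symm
    rw [hc_def]
    field_simp
    ring
  have hr_le (j : X) (m : ι) (hjm : φ j m ≠ 0) : r m ≤ J j + (c + δ) := by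
    rw [hr]
    refine sum_mul_le_of_sum_eq_one (hd0 m) (hd1 m) fun k hk _ => ?_
    linarith [hV k, hδ j m hjm k hk]
  have hagent (j : X) : agentValue φ ℓ V r j ≤ J j + (c + δ) :=
    agentValue_le (hφ0 j) (hφ1 j) (by linarith [hV j]) (hr_le j)
  calc
    bellman α U hU p g (agentValue φ ℓ V r) i ≤ bellman α U hU p g J i + α * (c + δ) :=
      bellman_le_add_const hα0 hp0 hp1 hagent i
    _ ≤ J i + c := by rw [hc]; gcongr; exact hJ i
    _ = V i := (hV i).symm

theorem stmt7
    {n q : ℕ} (hn : 0 < n) (hq : 0 < q)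
    {A : Type*}
    (α : ℝ) (hα0 : 0 ≤ α) (hα1 : α < 1)
    (I : Fin q → Finset (Fin n))
    (hIne : ∀ ℓ, (I ℓ).Nonempty)
    (hIdisj : ∀ ℓ m, ℓ ≠ m → Disjoint (I ℓ) (I m))
    (hIcover : ∀ i : Fin n, ∃ ℓ, i ∈ I ℓ)
    (U : Fin n → Finset A) (hU : ∀ i, (U i).Nonempty)
    (p : Fin n → A → Fin n → ℝ) (g : Fin n → A → Fin n → ℝ)
    (hp0 : ∀ i, ∀ u ∈ U i, ∀ j, 0 ≤ p i u j)
    (hp1 : ∀ i, ∀ u ∈ U i, ∑ j, p i u j = 1)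
    (d : Fin q → Fin n → ℝ)
    (hd0 : ∀ ℓ i, 0 ≤ d ℓ i)
    (hdz : ∀ ℓ i, i ∉ I ℓ → d ℓ i = 0)
    (hd1 : ∀ ℓ, ∑ i ∈ I ℓ, d ℓ i = 1)
    (Jstar : Fin n → ℝ)
    (hJ : ∀ i, Jstar i =
      (U i).inf' (hU i) (fun u => ∑ j, p i u j * (g i u j + α * Jstar j)))
    (δ : ℝ)
    (hδ : IsGreatest {x : ℝ | ∃ ℓ, ∃ i ∈ I ℓ, ∃ j ∈ I ℓ, x = |Jstar i - Jstar j|} δ)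
    (Vbar : Fin n → ℝ) (hVbar : ∀ j, Vbar j = Jstar j + α * δ / (1 - α))
    (rbar : Fin q → ℝ) (hrbar : ∀ m, rbar m = ∑ j ∈ I m, d m j * Vbar j) :
    ∀ ℓ, ∀ i ∈ I ℓ,
      (U i).inf' (hU i) (fun u => ∑ j, p i u j *
          (g i u j + α * ((if j ∈ I ℓ then (1 : ℝ) else 0) * Vbar j +
            ∑ m ∈ Finset.univ.erase ℓ, (if j ∈ I m then (1 : ℝ) else 0) * rbar m))) ≤
        Vbar i := by
  intro ℓ i hi
  have hosc (m : Fin q) (j : Fin n) (hj : j ∈ I m) (k : Fin n) (hk : k ∈ I m) :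
      |Jstar k - Jstar j| ≤ δ := hδ.2 ⟨m, k, hk, j, hj, rfl⟩
  exact stmt7_general hα0 hα1.ne hp0 hp1 hardAggregation_nonneg
    (fun j => sum_hardAggregation_eq_one hIdisj (hIcover j)) (fun m k _ => hd0 m k) hd1
    (fun i => (hJ i).ge) ((abs_nonneg _).trans (hosc ℓ i hi i hi))
    (fun j m hjm k hk =>
      (le_abs_self _).trans (hosc m j (mem_of_hardAggregation_ne_zero hjm) k hk))
    hVbar hrbar ℓ i
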